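/- Fix integers j ≥ 1, k ≥ 1 and n ≥ 1. For every ε > 0 there exists Q such that for every prime power q ≥ Q and every finite field F_q with q elements, | q^{-n} · Σ_{f ∈ M_n} Λ̃_j(f)·Λ̃_k(f) − Σ_{d=1}^{n−1} (d^j − (d−1)^j)(d^k − (d−1)^k) | < ε. (That is, lim_{q→∞} q^{-n} Σ_{f ∈ M_n} Λ̃_j(f)Λ̃_k(f) = Σ_{d=1}^{n−1} (d^j−(d−1)^j)(d^k−(d−1)^k).) -/

import Mathlib

open Polynomial

/-- The von Mangoldt function on `F_q[T]`: `Λ(f) = deg P` if `f = c·P^k` with `c ≠ 0`,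
`P` monic irreducible and `k ≥ 1`, and `Λ(f) = 0` otherwise. -/
noncomputable def polyVM {F : Type*} [Field F] (f : F[X]) : ℕ :=
  sSup {m : ℕ | ∃ (c : F) (P : F[X]) (k : ℕ),
    c ≠ 0 ∧ P.Monic ∧ Irreducible P ∧ 1 ≤ k ∧ f = C c * P ^ k ∧ m = P.natDegree}

/- The higher-order von Mangoldt functions: `Λ_0(f) = 1` iff `f` is a nonzero constant,
`Λ_1 = Λ`, and `Λ_j(f) = Σ'_{d ∣ f} Λ_{j-1}(d) Λ(f/d) + Λ_{j-1}(f)·deg f` for `j ≥ 2`,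
the sum being over monic divisors `d` of `f`. -/
open Classical in
noncomputable def polyVMJ {F : Type*} [Field F] : ℕ → F[X] → ℕ
  | 0 => fun f => if f ≠ 0 ∧ f.natDegree = 0 then 1 else 0
  | 1 => fun f => polyVM f
  | (j + 2) => fun f =>
      (∑ᶠ d ∈ {d : F[X] | d.Monic ∧ d ∣ f}, polyVMJ (j + 1) d * polyVM (f / d))
        + polyVMJ (j + 1) f * f.natDegree

/-- The centered higher von Mangoldt function
`Λ̃_j(f) = Λ_j(f) − (n^j − (n−1)^j)` where `n = deg f`. -/
noncomputable def polyVMT {F : Type*} [Field F] (j : ℕ) (f : F[X]) : ℝ :=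
  (polyVMJ j f : ℝ) - ((f.natDegree : ℝ) ^ j - ((f.natDegree : ℝ) - 1) ^ j)

/-!
For `φ : ℕ → ℝ` let `h_φ = μ * (φ ∘ deg)`, so that `Λ_j = h_φ` with `φ m = m ^ j`. If `d e` is
squarefree then `μ(d) h_ψ(d e)` is the sum of `μ(b) h_{ψ(deg b + ·)}(e)` over `b ∣ d`. Hence at
squarefree `f` the product `h_φ(f) h_ψ(f) = ∑ μ(d) φ(deg e) h_ψ(d e)`, over `f = d e`, is a divisor
sum `∑ κ(c)` over `c ∣ f`, where `κ(c) = ∑ μ(b) φ(deg e) h_{ψ(deg b + ·)}(e)` over `c = b e`.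

The mean of `μ` over monic polynomials of degree `i` is `1`, `-1`, `0`, `0`, …, so the mean of `κ`
over degree `d ≥ 1` collapses to `(φ d - φ (d - 1)) (ψ d - ψ (d - 1))`, and the mean of the divisor
sum over degree `n` is the sum of these for `d ≤ n`. The term `d = n` is the product of the means of
`h_φ` and `h_ψ`, which centering removes. In each degree the polynomials that are not squarefree
have density `O(1 / q)` and the values of `h_φ h_ψ` are bounded, so they only contribute to the
error.
-/

section CovarianceEstimate

open Finset UniqueFactorizationMonoid
open scoped BigOperators

/-! ### Factorizations into two monic factors -/

section Factorizations

variable {F : Type*} [Field F] {R : Type*} [AddCommMonoid R]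

theorem finite_setOf_monic_mul_eq (f : F[X]) :
    {p : F[X] × F[X] | p.1.Monic ∧ p.2.Monic ∧ p.1 * p.2 = f}.Finite := by
  classical
  refine ((normalizedFactors f).antidiagonal.toFinset.image
    (Prod.map Multiset.prod Multiset.prod)).finite_toSet.subset ?_
  rintro ⟨a, b⟩ ⟨ha, hb, rfl⟩
  simp only [coe_image, Set.mem_image, mem_coe, Multiset.mem_toFinset]
  refine ⟨(normalizedFactors a, normalizedFactors b), ?_, ?_⟩
  · rw [Multiset.mem_antidiagonal, normalizedFactors_mul ha.ne_zero hb.ne_zero]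
  · rw [Prod.map_apply, prod_normalizedFactors_eq ha.ne_zero, prod_normalizedFactors_eq hb.ne_zero,
      ha.normalize_eq_self, hb.normalize_eq_self]

/-- The pairs of monic polynomials with product `f`; sums over these pairs are Dirichlet
convolutions over `F[T]`. The set is empty unless `f` is monic. -/
noncomputable def monicFactorizations (f : F[X]) : Finset (F[X] × F[X]) :=
  (finite_setOf_monic_mul_eq f).toFinset

theorem mem_monicFactorizations {f : F[X]} {p : F[X] × F[X]} :
    p ∈ monicFactorizations f ↔ p.1.Monic ∧ p.2.Monic ∧ p.1 * p.2 = f := by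
  simp [monicFactorizations]

theorem natDegree_add_natDegree_of_mem_monicFactorizations {f : F[X]} {p : F[X] × F[X]}
    (hp : p ∈ monicFactorizations f) : p.1.natDegree + p.2.natDegree = f.natDegree := by
  obtain ⟨h₁, h₂, rfl⟩ := mem_monicFactorizations.mp hp
  exact (h₁.natDegree_mul h₂).symm

theorem monicFactorizations_one : monicFactorizations (1 : F[X]) = {(1, 1)} := by
  ext ⟨a, b⟩
  simp only [mem_monicFactorizations, mem_singleton, Prod.mk.injEq]
  constructor
  · rintro ⟨ha, hb, hab⟩
    exact ⟨ha.eq_one_of_isUnit (.of_mul_eq_one _ hab),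
      hb.eq_one_of_isUnit (.of_mul_eq_one_right _ hab)⟩
  · rintro ⟨rfl, rfl⟩
    simp

theorem sum_monicFactorizations_swap (f : F[X]) (φ : F[X] → F[X] → R) :
    ∑ p ∈ monicFactorizations f, φ p.1 p.2 = ∑ p ∈ monicFactorizations f, φ p.2 p.1 := by
  refine sum_nbij' Prod.swap Prod.swap ?_ ?_ ?_ ?_ ?_ <;>
    simp +contextual [mem_monicFactorizations, mul_comm]

theorem sum_monicFactorizations_assoc (f : F[X]) (φ : F[X] → F[X] → F[X] → R) :
    ∑ p ∈ monicFactorizations f, ∑ q ∈ monicFactorizations p.1, φ q.1 q.2 p.2 =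
      ∑ p ∈ monicFactorizations f, ∑ q ∈ monicFactorizations p.2, φ p.1 q.1 q.2 := by
  rw [sum_sigma', sum_sigma']
  refine sum_nbij' (fun x ↦ ⟨(x.2.1, x.2.2 * x.1.2), (x.2.2, x.1.2)⟩)
    (fun x ↦ ⟨(x.1.1 * x.2.1, x.2.2), (x.1.1, x.2.1)⟩) ?_ ?_ ?_ ?_ (fun _ _ ↦ rfl) <;>
    rintro ⟨⟨a, b⟩, ⟨c, d⟩⟩ <;> simp only [mem_sigma, mem_monicFactorizations]
  · rintro ⟨⟨-, hb, rfl⟩, hc, hd, rfl⟩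
    exact ⟨⟨hc, hd.mul hb, (mul_assoc c d b).symm⟩, hd, hb, trivial⟩
  · rintro ⟨⟨ha, -, rfl⟩, hc, hd, rfl⟩
    exact ⟨⟨ha.mul hc, hd, mul_assoc a c d⟩, ha, hc, trivial⟩
  · rintro ⟨-, -, -, rfl⟩
    trivial
  · rintro ⟨-, -, -, rfl⟩
    trivial

open Classical in
theorem sum_monicFactorizations_irreducible_mul {P : F[X]} (hP : P.Monic) (hI : Irreducible P)
    (u : F[X]) (φ : F[X] → F[X] → R) :
    ∑ p ∈ monicFactorizations (P * u), φ p.1 p.2 =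
      ∑ p ∈ monicFactorizations u, φ (P * p.1) p.2 +
        ∑ p ∈ monicFactorizations u with ¬P ∣ p.1, φ p.1 (P * p.2) := by
  rw [← sum_filter_add_sum_filter_not _ (fun p ↦ P ∣ p.1)]
  congr 1 <;> symm
  · refine sum_bij (fun p _ ↦ (P * p.1, p.2)) ?_ ?_ ?_ (fun _ _ ↦ rfl)
    · rintro ⟨a, b⟩
      simp only [mem_filter, mem_monicFactorizations]
      rintro ⟨ha, hb, rfl⟩
      exact ⟨⟨hP.mul ha, hb, mul_assoc P a b⟩, dvd_mul_right P a⟩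
    · simp +contextual [Prod.ext_iff, hP.ne_zero]
    · rintro ⟨a, b⟩
      simp only [mem_filter, mem_monicFactorizations]
      rintro ⟨⟨ha, hb, hab⟩, a', rfl⟩
      refine ⟨(a', b), ⟨hP.of_mul_monic_left ha, hb, mul_left_cancel₀ hP.ne_zero ?_⟩, rfl⟩
      rw [← hab, mul_assoc]
  · refine sum_bij (fun p _ ↦ (p.1, P * p.2)) ?_ ?_ ?_ (fun _ _ ↦ rfl)
    · rintro ⟨a, b⟩
      simp only [mem_filter, mem_monicFactorizations]
      rintro ⟨⟨ha, hb, rfl⟩, hPa⟩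
      exact ⟨⟨ha, hP.mul hb, mul_left_comm a P b⟩, hPa⟩
    · simp +contextual [Prod.ext_iff, hP.ne_zero]
    · rintro ⟨a, b⟩
      simp only [mem_filter, mem_monicFactorizations]
      rintro ⟨⟨ha, hb, hab⟩, hPa⟩
      obtain ⟨b', rfl⟩ :=
        (hI.prime.dvd_or_dvd (hab ▸ dvd_mul_right P u : P ∣ a * b)).resolve_left hPa
      refine ⟨(a, b'), ⟨⟨ha, hP.of_mul_monic_left hb, mul_left_cancel₀ hP.ne_zero ?_⟩, hPa⟩, rfl⟩
      rw [← hab, mul_left_comm]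

@[elab_as_elim]
theorem monic_induction_on_irreducible {motive : ∀ f : F[X], f.Monic → Prop}
    (one : motive 1 monic_one)
    (irreducible_mul : ∀ (P u : F[X]) (hP : P.Monic) (_ : Irreducible P) (hu : u.Monic),
      motive u hu → motive (P * u) (hP.mul hu))
    {f : F[X]} (hf : f.Monic) : motive f hf := by
  induction hn : f.natDegree using Nat.strong_induction_on generalizing f with
  | _ n ih =>
    rcases eq_or_ne f 1 with rfl | hf1
    · exact one
    obtain ⟨P, hP, hI, u, rfl⟩ := exists_monic_irreducible_factor f
      fun hu ↦ hf1 (hf.eq_one_of_isUnit hu)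
    have hu : u.Monic := hP.of_mul_monic_left hf
    have hdeg := hP.natDegree_mul hu
    have hpos := hI.natDegree_pos
    exact irreducible_mul P u hP hI hu (ih u.natDegree (by lia) hu rfl)

theorem card_monicFactorizations_le {f : F[X]} (hf : f.Monic) :
    #(monicFactorizations f) ≤ 2 ^ f.natDegree := by
  classical
  induction hf using monic_induction_on_irreducible with
  | one => simp [monicFactorizations_one]
  | irreducible_mul P u hP hI hu ih =>
    have hsplit := sum_monicFactorizations_irreducible_mul hP hI u (fun _ _ ↦ 1)
    simp only [← card_eq_sum_ones] at hsplit
    calc #(monicFactorizations (P * u))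
        ≤ 2 ^ u.natDegree + 2 ^ u.natDegree :=
          hsplit.trans_le <| add_le_add ih <| (card_filter_le _ _).trans ih
      _ = 2 ^ (1 + u.natDegree) := by ring
      _ ≤ 2 ^ (P * u).natDegree := by
          rw [hP.natDegree_mul hu]
          exact Nat.pow_le_pow_right two_pos (Nat.add_le_add_right hI.natDegree_pos _)

theorem abs_sum_monicFactorizations_le {f : F[X]} (hf : f.Monic) {φ : F[X] × F[X] → ℝ} {B : ℝ}
    (hφ : ∀ p ∈ monicFactorizations f, |φ p| ≤ B) :
    |∑ p ∈ monicFactorizations f, φ p| ≤ 2 ^ f.natDegree * B := by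
  have hB : 0 ≤ B := (abs_nonneg _).trans <|
    hφ (1, f) (mem_monicFactorizations.mpr ⟨monic_one, hf, one_mul f⟩)
  calc |∑ p ∈ monicFactorizations f, φ p|
      ≤ ∑ p ∈ monicFactorizations f, |φ p| := abs_sum_le_sum_abs _ _
    _ ≤ #(monicFactorizations f) * B := by
        simpa only [nsmul_eq_mul] using sum_le_card_nsmul _ _ _ hφ
    _ ≤ 2 ^ f.natDegree * B := by
        gcongr
        exact_mod_cast card_monicFactorizations_le hf

end Factorizations

/-! ### The Möbius function -/

section Moebius

variable {F : Type*} [Field F]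

open Classical in
/-- The Möbius function on `F[T]`, with real values because it is used in averages. -/
noncomputable def polyMoebius (f : F[X]) : ℝ :=
  if Squarefree f then (-1) ^ (normalizedFactors f).card else 0

theorem abs_polyMoebius_le_one (f : F[X]) : |polyMoebius f| ≤ 1 := by
  unfold polyMoebius
  split_ifs <;> simp

theorem polyMoebius_one : polyMoebius (1 : F[X]) = 1 := by
  simp [polyMoebius]

open Classical in
theorem polyMoebius_irreducible_mul {P : F[X]} (hI : Irreducible P) (f : F[X]) :
    polyMoebius (P * f) = if P ∣ f then 0 else -polyMoebius f := by
  split_ifs with hPf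
  · exact if_neg fun hsq ↦ hI.not_isUnit (hsq P (mul_dvd_mul_left P hPf))
  · have hiff : Squarefree (P * f) ↔ Squarefree f := by
      simp [squarefree_mul_iff, hI.isRelPrime_iff_not_dvd.mpr hPf, hI.squarefree]
    by_cases hsq : Squarefree f
    · simp [polyMoebius, hiff, hsq, normalizedFactors_mul hI.ne_zero hsq.ne_zero,
        normalizedFactors_irreducible hI, pow_add]
    · simp [polyMoebius, hiff, hsq]

open Classical in
theorem sum_polyMoebius {f : F[X]} (hf : f.Monic) :
    ∑ p ∈ monicFactorizations f, polyMoebius p.1 = if f = 1 then 1 else 0 := by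
  split_ifs with hf1
  · simp [hf1, monicFactorizations_one, polyMoebius_one]
  · obtain ⟨P, hP, hI, u, rfl⟩ := exists_monic_irreducible_factor f
      fun hu ↦ hf1 (hf.eq_one_of_isUnit hu)
    rw [sum_monicFactorizations_irreducible_mul hP hI u (fun a _ ↦ polyMoebius a), sum_filter,
      ← sum_add_distrib]
    refine sum_eq_zero fun p _ ↦ ?_
    rw [polyMoebius_irreducible_mul hI]
    split_ifs <;> simp_all

theorem eq_sum_polyMoebius_mul_of_forall_sum_eq {g G : F[X] → ℝ}
    (hG : ∀ f : F[X], f.Monic → ∑ p ∈ monicFactorizations f, g p.1 = G f)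
    {f : F[X]} (hf : f.Monic) :
    g f = ∑ p ∈ monicFactorizations f, polyMoebius p.1 * G p.2 := by
  classical
  calc g f
      = ∑ p ∈ monicFactorizations f, (if p.1 = 1 then 1 else 0) * g p.2 := by
        rw [sum_eq_single_of_mem (1, f) (mem_monicFactorizations.mpr ⟨monic_one, hf, one_mul f⟩)]
        · simp
        · rintro ⟨a, b⟩ hp hne
          obtain ⟨-, -, rfl⟩ := mem_monicFactorizations.mp hp
          rw [if_neg (by rintro rfl; simp at hne), zero_mul]
    _ = ∑ p ∈ monicFactorizations f, ∑ q ∈ monicFactorizations p.1, polyMoebius q.1 * g p.2 :=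
        sum_congr rfl fun p hp ↦ by
          rw [← sum_mul, sum_polyMoebius (mem_monicFactorizations.mp hp).1]
    _ = ∑ p ∈ monicFactorizations f, ∑ q ∈ monicFactorizations p.2, polyMoebius p.1 * g q.2 :=
        sum_monicFactorizations_assoc f fun a _ b ↦ polyMoebius a * g b
    _ = ∑ p ∈ monicFactorizations f, polyMoebius p.1 * G p.2 :=
        sum_congr rfl fun p hp ↦ by
          rw [← mul_sum, sum_monicFactorizations_swap p.2 (fun _ b ↦ g b),
            hG p.2 (mem_monicFactorizations.mp hp).2.1]

end Moebius

/-! ### The von Mangoldt functions as Möbius transforms -/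

section VonMangoldt

variable {F : Type*} [Field F]

theorem polyVM_pow {P : F[X]} (hP : P.Monic) (hI : Irreducible P) {k : ℕ} (hk : 1 ≤ k) :
    polyVM (P ^ k) = P.natDegree := by
  rw [polyVM]
  convert csSup_singleton P.natDegree using 1
  congr 1
  ext m
  simp only [Set.mem_ofPred_eq, Set.mem_singleton_iff]
  constructor
  · rintro ⟨c, Q, i, hc, hQ, hQI, -, h, rfl⟩
    have hPQ : P ∣ Q ^ i := by
      have : P ∣ C c * Q ^ i := h ▸ dvd_pow_self P (by lia)
      rwa [(isUnit_C.mpr hc.isUnit).dvd_mul_left] at this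
    rw [eq_of_monic_of_associated hP hQ
      (hI.associated_of_dvd hQI (hI.prime.dvd_of_dvd_pow hPQ))]
  · rintro rfl
    exact ⟨1, P, k, one_ne_zero, hP, hI, hk, by simp, rfl⟩

theorem exists_eq_pow_of_polyVM_ne_zero {f : F[X]} (hf : f.Monic) (h : polyVM f ≠ 0) :
    ∃ (P : F[X]) (k : ℕ), P.Monic ∧ Irreducible P ∧ 1 ≤ k ∧ f = P ^ k := by
  obtain ⟨_, c, P, k, -, hP, hI, hk, rfl, -⟩ : {m : ℕ | ∃ (c : F) (P : F[X]) (k : ℕ),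
      c ≠ 0 ∧ P.Monic ∧ Irreducible P ∧ 1 ≤ k ∧ f = C c * P ^ k ∧ m = P.natDegree}.Nonempty := by
    by_contra hempty
    exact h (by rw [polyVM, Set.not_nonempty_iff_eq_empty.mp hempty, csSup_empty, bot_eq_zero])
  have hc : c = 1 := by simpa [Monic, (hP.pow k).leadingCoeff] using hf
  exact ⟨P, k, hP, hI, hk, by simp [hc]⟩

theorem polyVM_one : polyVM (1 : F[X]) = 0 := by
  by_contra h
  obtain ⟨P, k, -, hI, hk, hPk⟩ := exists_eq_pow_of_polyVM_ne_zero monic_one h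
  exact hI.not_isUnit (isUnit_of_dvd_one (hPk ▸ dvd_pow_self P (by lia)))

theorem pow_mul_inj_of_not_dvd {M : Type*} [CommMonoidWithZero M] [IsCancelMulZero M] {p a b : M}
    (hp : p ≠ 0) (ha : ¬p ∣ a) (hb : ¬p ∣ b) {i j : ℕ} (h : p ^ i * a = p ^ j * b) :
    i = j ∧ a = b := by
  wlog hij : i ≤ j generalizing i j a b
  · exact (this hb ha h.symm (by lia)).imp Eq.symm Eq.symm
  obtain ⟨d, rfl⟩ := Nat.exists_eq_add_of_le hij
  have hab : a = p ^ d * b := by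
    rw [pow_add, mul_assoc] at h
    exact mul_left_cancel₀ (pow_ne_zero i hp) h
  rcases d with _ | d
  · simpa using hab
  · exact absurd (hab ▸ (dvd_pow_self p d.succ_ne_zero).mul_right b) ha

open Classical in
theorem sum_polyVM_irreducible_mul {P u : F[X]} (hP : P.Monic) (hI : Irreducible P)
    (hu : u.Monic) :
    ∑ p ∈ monicFactorizations u with ¬P ∣ p.1, polyVM (P * p.2) = P.natDegree := by
  obtain ⟨w, hw, hPw⟩ := (FiniteMultiplicity.of_not_isUnit hI.not_isUnit
    hu.ne_zero).exists_eq_pow_mul_and_not_dvd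
  set v := multiplicity P u
  have hmem : (w, P ^ v) ∈ {p ∈ monicFactorizations u | ¬P ∣ p.1} :=
    mem_filter.mpr ⟨mem_monicFactorizations.mpr
      ⟨(hP.pow v).of_mul_monic_left (hw ▸ hu), hP.pow v, by rw [hw, mul_comm]⟩, hPw⟩
  rw [sum_eq_single_of_mem _ hmem]
  · rw [← pow_succ', polyVM_pow hP hI v.succ_pos]
  rintro ⟨a, b⟩ hab hne
  obtain ⟨hab, hPa⟩ := mem_filter.mp hab
  obtain ⟨-, hb, hab⟩ := mem_monicFactorizations.mp hab
  contrapose! hne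
  obtain ⟨Q, k, hQ, hQI, hk, hbk⟩ := exists_eq_pow_of_polyVM_ne_zero (hP.mul hb) hne
  obtain rfl : P = Q := eq_of_monic_of_associated hP hQ
    (hI.associated_of_dvd hQI (hI.prime.dvd_of_dvd_pow (hbk ▸ dvd_mul_right P b)))
  obtain ⟨i, rfl⟩ := Nat.exists_eq_add_of_le' hk
  obtain rfl : b = P ^ i := mul_left_cancel₀ hP.ne_zero (hbk.trans (pow_succ' P i))
  obtain ⟨rfl, rfl⟩ := pow_mul_inj_of_not_dvd hP.ne_zero hPa hPw
    ((mul_comm _ _).trans (hab.trans hw))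
  rfl

theorem sum_polyVM {f : F[X]} (hf : f.Monic) :
    ∑ p ∈ monicFactorizations f, polyVM p.2 = f.natDegree := by
  classical
  induction hf using monic_induction_on_irreducible with
  | one => simp [monicFactorizations_one, polyVM_one]
  | irreducible_mul P u hP hI hu ih =>
    rw [sum_monicFactorizations_irreducible_mul hP hI u (fun _ b ↦ polyVM b), ih,
      sum_polyVM_irreducible_mul hP hI hu, hP.natDegree_mul hu, add_comm]

theorem polyVMJ_succ {j : ℕ} (hj : 1 ≤ j) {f : F[X]} (hf : f.Monic) :
    polyVMJ (j + 1) f =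
      ∑ p ∈ monicFactorizations f, polyVMJ j p.1 * polyVM p.2 + polyVMJ j f * f.natDegree := by
  classical
  obtain ⟨j, rfl⟩ := Nat.exists_eq_add_of_le' hj
  have hset : {d : F[X] | d.Monic ∧ d ∣ f} = (monicFactorizations f).image Prod.fst := by
    ext d
    simp only [Set.mem_ofPred_eq, coe_image, Set.mem_image, mem_coe, mem_monicFactorizations]
    constructor
    · rintro ⟨hd, e, rfl⟩
      exact ⟨(d, e), ⟨hd, hd.of_mul_monic_left hf, rfl⟩, rfl⟩
    · rintro ⟨⟨a, b⟩, ⟨ha, -, rfl⟩, rfl⟩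
      exact ⟨ha, dvd_mul_right a b⟩
  have hinj : Set.InjOn Prod.fst (monicFactorizations f : Set (F[X] × F[X])) := by
    rintro ⟨a, b⟩ h ⟨a', b'⟩ h' rfl
    obtain ⟨ha, -, hab⟩ := mem_monicFactorizations.mp h
    obtain ⟨-, -, hab'⟩ := mem_monicFactorizations.mp h'
    exact Prod.ext rfl (mul_left_cancel₀ ha.ne_zero (hab.trans hab'.symm))
  simp only [polyVMJ]
  rw [hset, finsum_mem_coe_finset, sum_image hinj]
  congr 1
  refine sum_congr rfl fun p hp ↦ ?_
  obtain ⟨h₁, -, rfl⟩ := mem_monicFactorizations.mp hp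
  rw [mul_div_cancel_left₀ _ h₁.ne_zero]

theorem sum_polyVMJ {j : ℕ} (hj : 1 ≤ j) {f : F[X]} (hf : f.Monic) :
    ∑ p ∈ monicFactorizations f, polyVMJ j p.1 = f.natDegree ^ j := by
  induction j, hj using Nat.le_induction generalizing f with
  | base =>
    rw [pow_one, sum_monicFactorizations_swap f (fun a _ ↦ polyVMJ 1 a)]
    exact sum_polyVM hf
  | succ j hj ih =>
    calc ∑ p ∈ monicFactorizations f, polyVMJ (j + 1) p.1
        = ∑ p ∈ monicFactorizations f, ∑ q ∈ monicFactorizations p.1, polyVMJ j q.1 * polyVM q.2 +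
            ∑ p ∈ monicFactorizations f, polyVMJ j p.1 * p.1.natDegree := by
          rw [← sum_add_distrib]
          exact sum_congr rfl fun p hp ↦ polyVMJ_succ hj (mem_monicFactorizations.mp hp).1
      _ = ∑ p ∈ monicFactorizations f, polyVMJ j p.1 * p.2.natDegree +
            ∑ p ∈ monicFactorizations f, polyVMJ j p.1 * p.1.natDegree := by
          rw [sum_monicFactorizations_assoc f fun a b _ ↦ polyVMJ j a * polyVM b]
          congr 1
          refine sum_congr rfl fun p hp ↦ ?_
          rw [← mul_sum, sum_monicFactorizations_swap p.2 fun a _ ↦ polyVM a,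
            sum_polyVM (mem_monicFactorizations.mp hp).2.1]
      _ = ∑ p ∈ monicFactorizations f, polyVMJ j p.1 * f.natDegree := by
          rw [← sum_add_distrib]
          refine sum_congr rfl fun p hp ↦ ?_
          rw [← mul_add, add_comm, natDegree_add_natDegree_of_mem_monicFactorizations hp]
      _ = f.natDegree ^ (j + 1) := by rw [← sum_mul, ih hf, pow_succ]

/-- The Dirichlet convolution `μ * (φ ∘ deg)`, which specializes to `Λ_j` when `φ m = m ^ j`. -/
noncomputable def moebiusTransform (φ : ℕ → ℝ) (f : F[X]) : ℝ :=
  ∑ p ∈ monicFactorizations f, polyMoebius p.1 * φ p.2.natDegree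

theorem polyVMJ_eq_moebiusTransform {j : ℕ} (hj : 1 ≤ j) {f : F[X]} (hf : f.Monic) :
    (polyVMJ j f : ℝ) = moebiusTransform (fun m ↦ (m : ℝ) ^ j) f :=
  eq_sum_polyMoebius_mul_of_forall_sum_eq (g := fun f ↦ (polyVMJ j f : ℝ))
    (G := fun f ↦ (f.natDegree : ℝ) ^ j) (fun f hf ↦ by exact_mod_cast sum_polyVMJ hj hf) hf

end VonMangoldt

/-! ### Products of two Möbius transforms -/

section Product

variable {F : Type*} [Field F] (φ ψ : ℕ → ℝ)

theorem moebiusTransform_irreducible_mul {P u : F[X]} (hP : P.Monic) (hI : Irreducible P)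
    (hPu : ¬P ∣ u) :
    moebiusTransform φ (P * u) =
      moebiusTransform (fun m ↦ φ (P.natDegree + m)) u - moebiusTransform φ u := by
  classical
  have hndvd : ∀ p ∈ monicFactorizations u, ¬P ∣ p.1 := fun p hp hPp ↦
    hPu ((mem_monicFactorizations.mp hp).2.2 ▸ hPp.mul_right p.2)
  rw [moebiusTransform, sum_monicFactorizations_irreducible_mul hP hI u
    (fun a b ↦ polyMoebius a * φ b.natDegree), filter_true_of_mem hndvd, moebiusTransform,
    moebiusTransform, ← sum_add_distrib, ← sum_sub_distrib]
  refine sum_congr rfl fun p hp ↦ ?_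
  rw [polyMoebius_irreducible_mul hI, if_neg (hndvd p hp),
    hP.natDegree_mul (mem_monicFactorizations.mp hp).2.1]
  ring

theorem polyMoebius_mul_moebiusTransform_mul {d e : F[X]} (hd : d.Monic)
    (hsq : Squarefree (d * e)) :
    polyMoebius d * moebiusTransform ψ (d * e) =
      ∑ p ∈ monicFactorizations d,
        polyMoebius p.2 * moebiusTransform (fun m ↦ ψ (p.2.natDegree + m)) e := by
  classical
  induction hd using monic_induction_on_irreducible generalizing ψ with
  | one => simp [monicFactorizations_one, polyMoebius_one]
  | irreducible_mul P u hP hI _ ih =>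
    rw [mul_assoc] at hsq
    have hPue : ¬P ∣ u * e := hI.isRelPrime_iff_not_dvd.mp (squarefree_mul_iff.mp hsq).1
    have hPu : ¬P ∣ u := fun h ↦ hPue (h.mul_right e)
    have hndvd : ∀ p ∈ monicFactorizations u, ¬P ∣ p.1 ∧ ¬P ∣ p.2 := fun p hp ↦ by
      obtain ⟨-, -, rfl⟩ := mem_monicFactorizations.mp hp
      exact ⟨fun h ↦ hPu (h.mul_right _), fun h ↦ hPu (h.mul_left _)⟩
    rw [mul_assoc, polyMoebius_irreducible_mul hI, if_neg hPu,
      moebiusTransform_irreducible_mul ψ hP hI hPue, neg_mul, mul_sub, ih _ hsq.of_mul_right,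
      ih _ hsq.of_mul_right, sum_monicFactorizations_irreducible_mul hP hI u
        (fun _ b ↦ polyMoebius b * moebiusTransform (fun m ↦ ψ (b.natDegree + m)) e),
      filter_true_of_mem fun p hp ↦ (hndvd p hp).1, neg_sub, sub_eq_add_neg, ← sum_neg_distrib]
    congr 1
    refine sum_congr rfl fun p hp ↦ ?_
    rw [polyMoebius_irreducible_mul hI, if_neg (hndvd p hp).2,
      hP.natDegree_mul (mem_monicFactorizations.mp hp).2.1, neg_mul]
    simp only [add_assoc]

/-- The function `κ` whose divisor sums agree with `moebiusTransform φ * moebiusTransform ψ` at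
squarefree polynomials, and whose mean over each degree is computable in closed form. -/
noncomputable def moebiusCross (f : F[X]) : ℝ :=
  ∑ p ∈ monicFactorizations f, polyMoebius p.1 *
    (φ p.2.natDegree * moebiusTransform (fun m ↦ ψ (p.1.natDegree + m)) p.2)

theorem moebiusTransform_mul_moebiusTransform {f : F[X]} (hsq : Squarefree f) :
    moebiusTransform φ f * moebiusTransform ψ f =
      ∑ p ∈ monicFactorizations f, moebiusCross φ ψ p.2 := by
  calc moebiusTransform φ f * moebiusTransform ψ f
      = ∑ p ∈ monicFactorizations f, ∑ q ∈ monicFactorizations p.1, polyMoebius q.2 *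
          (φ p.2.natDegree * moebiusTransform (fun m ↦ ψ (q.2.natDegree + m)) p.2) := by
        rw [moebiusTransform, sum_mul]
        refine sum_congr rfl fun p hp ↦ ?_
        obtain ⟨h₁, -, rfl⟩ := mem_monicFactorizations.mp hp
        rw [mul_right_comm, polyMoebius_mul_moebiusTransform_mul ψ h₁ hsq, sum_mul]
        exact sum_congr rfl fun q _ ↦ by ring
    _ = ∑ p ∈ monicFactorizations f, moebiusCross φ ψ p.2 :=
        sum_monicFactorizations_assoc f fun _ b c ↦ polyMoebius b *
          (φ c.natDegree * moebiusTransform (fun m ↦ ψ (b.natDegree + m)) c)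

variable {φ ψ} {B : ℝ}

theorem abs_moebiusTransform_le {f : F[X]} (hf : f.Monic)
    (hφ : ∀ m ≤ f.natDegree, |φ m| ≤ B) :
    |moebiusTransform φ f| ≤ 2 ^ f.natDegree * B := by
  refine abs_sum_monicFactorizations_le hf fun p hp ↦ ?_
  have hdeg := natDegree_add_natDegree_of_mem_monicFactorizations hp
  rw [abs_mul]
  exact (mul_le_of_le_one_left (abs_nonneg _) (abs_polyMoebius_le_one _)).trans (hφ _ (by lia))

theorem abs_moebiusCross_le {f : F[X]} (hf : f.Monic) (hφ : ∀ m ≤ f.natDegree, |φ m| ≤ B)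
    (hψ : ∀ m ≤ f.natDegree, |ψ m| ≤ B) :
    |moebiusCross φ ψ f| ≤ 4 ^ f.natDegree * B ^ 2 := by
  have hB : 0 ≤ B := (abs_nonneg _).trans (hφ 0 (Nat.zero_le _))
  have hterm : |moebiusCross φ ψ f| ≤ 2 ^ f.natDegree * (B * (2 ^ f.natDegree * B)) := by
    refine abs_sum_monicFactorizations_le hf fun p hp ↦ ?_
    have hdeg := natDegree_add_natDegree_of_mem_monicFactorizations hp
    have hinner : |moebiusTransform (fun m ↦ ψ (p.1.natDegree + m)) p.2| ≤
        2 ^ f.natDegree * B :=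
      (abs_moebiusTransform_le (mem_monicFactorizations.mp hp).2.1
        fun m hm ↦ hψ _ (by lia)).trans (by gcongr <;> [norm_num; lia])
    rw [abs_mul, abs_mul]
    refine (mul_le_of_le_one_left (by positivity) (abs_polyMoebius_le_one _)).trans ?_
    exact mul_le_mul (hφ _ (by lia)) hinner (abs_nonneg _) hB
  calc |moebiusCross φ ψ f| ≤ 2 ^ f.natDegree * (B * (2 ^ f.natDegree * B)) := hterm
    _ = (2 * 2) ^ f.natDegree * B ^ 2 := by rw [mul_pow]; ring
    _ = 4 ^ f.natDegree * B ^ 2 := by norm_num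

theorem abs_moebiusTransform_mul_sub_sum_moebiusCross_le {f : F[X]} (hf : f.Monic)
    (hφ : ∀ m ≤ f.natDegree, |φ m| ≤ B) (hψ : ∀ m ≤ f.natDegree, |ψ m| ≤ B) :
    |moebiusTransform φ f * moebiusTransform ψ f -
      ∑ p ∈ monicFactorizations f, moebiusCross φ ψ p.2| ≤ 2 * 8 ^ f.natDegree * B ^ 2 := by
  have hB : 0 ≤ B := (abs_nonneg _).trans (hφ 0 (Nat.zero_le _))
  have hprod : |moebiusTransform φ f * moebiusTransform ψ f| ≤ 8 ^ f.natDegree * B ^ 2 := by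
    calc |moebiusTransform φ f * moebiusTransform ψ f|
        ≤ (2 ^ f.natDegree * B) * (2 ^ f.natDegree * B) := by
          rw [abs_mul]
          exact mul_le_mul (abs_moebiusTransform_le hf hφ) (abs_moebiusTransform_le hf hψ)
            (abs_nonneg _) (by positivity)
      _ = (2 * 2) ^ f.natDegree * B ^ 2 := by rw [mul_pow]; ring
      _ ≤ 8 ^ f.natDegree * B ^ 2 := by gcongr; norm_num
  have hsum : |∑ p ∈ monicFactorizations f, moebiusCross φ ψ p.2| ≤
      8 ^ f.natDegree * B ^ 2 := by
    calc |∑ p ∈ monicFactorizations f, moebiusCross φ ψ p.2|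
        ≤ 2 ^ f.natDegree * (4 ^ f.natDegree * B ^ 2) := by
          refine abs_sum_monicFactorizations_le hf fun p hp ↦ ?_
          have hdeg := natDegree_add_natDegree_of_mem_monicFactorizations hp
          refine (abs_moebiusCross_le (mem_monicFactorizations.mp hp).2.1
            (fun m hm ↦ hφ m (by lia)) fun m hm ↦ hψ m (by lia)).trans ?_
          gcongr <;> [norm_num; lia]
      _ = (2 * 4) ^ f.natDegree * B ^ 2 := by rw [mul_pow]; ring
      _ = 8 ^ f.natDegree * B ^ 2 := by norm_num
  linarith [abs_sub (moebiusTransform φ f * moebiusTransform ψ f)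
    (∑ p ∈ monicFactorizations f, moebiusCross φ ψ p.2)]

end Product

/-! ### Averages over monic polynomials of a given degree -/

section Average

variable (F : Type*) [Field F] [Fintype F]

/-- The set `M_n` of monic polynomials of degree `n`. -/
noncomputable def monicsOfDegree (n : ℕ) : Finset F[X] :=
  univ.map <| ((monicEquivDegreeLT n).trans (degreeLTEquiv F n).toEquiv).symm.toEmbedding.trans
    (Function.Embedding.subtype _)

variable {F}

theorem mem_monicsOfDegree {n : ℕ} {f : F[X]} :
    f ∈ monicsOfDegree F n ↔ f.Monic ∧ f.natDegree = n := by
  simp only [monicsOfDegree, mem_map, mem_univ, true_and]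
  refine ⟨?_, fun hf ↦ ⟨((monicEquivDegreeLT n).trans (degreeLTEquiv F n).toEquiv) ⟨f, hf⟩, ?_⟩⟩
  · rintro ⟨a, rfl⟩
    exact (((monicEquivDegreeLT n).trans (degreeLTEquiv F n).toEquiv).symm a).2
  · rw [Function.Embedding.trans_apply, Equiv.coe_toEmbedding, Equiv.symm_apply_apply]
    rfl

theorem card_monicsOfDegree (n : ℕ) : #(monicsOfDegree F n) = Fintype.card F ^ n := by
  simp [monicsOfDegree]

theorem monicsOfDegree_nonempty (n : ℕ) : (monicsOfDegree F n).Nonempty :=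
  ⟨X ^ n, mem_monicsOfDegree.mpr ⟨monic_X_pow n, natDegree_X_pow n⟩⟩

theorem monicsOfDegree_zero : monicsOfDegree F 0 = {1} := by
  ext f
  rw [mem_monicsOfDegree, mem_singleton]
  refine ⟨fun ⟨hf, hdeg⟩ ↦ hf.natDegree_eq_zero.mp hdeg, ?_⟩
  rintro rfl
  exact ⟨monic_one, natDegree_one⟩

theorem sum_monicsOfDegree_sum_monicFactorizations {R : Type*} [AddCommMonoid R] (n : ℕ)
    (g : F[X] → F[X] → R) :
    ∑ f ∈ monicsOfDegree F n, ∑ p ∈ monicFactorizations f, g p.1 p.2 =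
      ∑ x ∈ antidiagonal n, ∑ a ∈ monicsOfDegree F x.1, ∑ b ∈ monicsOfDegree F x.2, g a b := by
  simp only [← sum_product', sum_sigma']
  refine sum_nbij' (fun x ↦ ⟨(x.2.1.natDegree, x.2.2.natDegree), x.2⟩)
    (fun x ↦ ⟨x.2.1 * x.2.2, x.2⟩) ?_ ?_ ?_ ?_ (fun _ _ ↦ rfl)
  · rintro ⟨f, a, b⟩
    simp only [mem_sigma, mem_monicFactorizations, mem_monicsOfDegree,
      HasAntidiagonal.mem_antidiagonal, mem_product]
    rintro ⟨⟨-, rfl⟩, ha, hb, rfl⟩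
    exact ⟨(ha.natDegree_mul hb).symm, ⟨ha, trivial⟩, hb, trivial⟩
  · rintro ⟨⟨i, j⟩, a, b⟩
    simp only [mem_sigma, mem_monicFactorizations, mem_monicsOfDegree,
      HasAntidiagonal.mem_antidiagonal, mem_product]
    rintro ⟨rfl, ⟨ha, rfl⟩, hb, rfl⟩
    exact ⟨⟨ha.mul hb, ha.natDegree_mul hb⟩, ha, hb, trivial⟩
  · rintro ⟨f, a, b⟩
    simp only [mem_sigma, mem_monicFactorizations]
    rintro ⟨-, -, -, rfl⟩
    rfl
  · rintro ⟨⟨i, j⟩, a, b⟩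
    simp only [mem_sigma, mem_monicsOfDegree, mem_product]
    rintro ⟨-, ⟨-, rfl⟩, -, rfl⟩
    rfl

theorem expect_sum_monicFactorizations (n : ℕ) (g : F[X] → F[X] → ℝ) :
    𝔼 f ∈ monicsOfDegree F n, ∑ p ∈ monicFactorizations f, g p.1 p.2 =
      ∑ x ∈ antidiagonal n, 𝔼 a ∈ monicsOfDegree F x.1, 𝔼 b ∈ monicsOfDegree F x.2, g a b := by
  simp only [expect_eq_sum_div_card, card_monicsOfDegree, ← sum_div]
  rw [sum_monicsOfDegree_sum_monicFactorizations, sum_div]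
  refine sum_congr rfl fun x hx ↦ ?_
  rw [div_div, ← Nat.cast_mul, ← pow_add, add_comm x.2, HasAntidiagonal.mem_antidiagonal.mp hx]

theorem sum_range_expect_polyMoebius (n : ℕ) :
    ∑ i ∈ range (n + 1), 𝔼 f ∈ monicsOfDegree F i, polyMoebius f = if n = 0 then 1 else 0 := by
  classical
  calc ∑ i ∈ range (n + 1), 𝔼 f ∈ monicsOfDegree F i, polyMoebius f
      = ∑ x ∈ antidiagonal n, 𝔼 a ∈ monicsOfDegree F x.1, 𝔼 _b ∈ monicsOfDegree F x.2,
          polyMoebius a := by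
        simp only [expect_const (monicsOfDegree_nonempty _)]
        exact (Nat.sum_antidiagonal_eq_sum_range_succ_mk
          (fun x ↦ 𝔼 f ∈ monicsOfDegree F x.1, polyMoebius f) n).symm
    _ = 𝔼 f ∈ monicsOfDegree F n, ∑ p ∈ monicFactorizations f, polyMoebius p.1 :=
        (expect_sum_monicFactorizations n fun a _ ↦ polyMoebius a).symm
    _ = 𝔼 _f ∈ monicsOfDegree F n, if n = 0 then 1 else 0 :=
        expect_congr rfl fun f hf ↦ by
          obtain ⟨hmonic, rfl⟩ := mem_monicsOfDegree.mp hf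
          simp only [sum_polyMoebius hmonic, hmonic.natDegree_eq_zero]
    _ = if n = 0 then 1 else 0 := expect_const (monicsOfDegree_nonempty n) _

theorem expect_polyMoebius_zero : 𝔼 f ∈ monicsOfDegree F 0, polyMoebius f = 1 := by
  rw [monicsOfDegree_zero, expect_singleton, polyMoebius_one]

theorem expect_polyMoebius_succ (n : ℕ) :
    𝔼 f ∈ monicsOfDegree F (n + 1), polyMoebius f = if n = 0 then -1 else 0 := by
  have hsum := sum_range_expect_polyMoebius (F := F) (n + 1)
  rw [sum_range_succ, sum_range_expect_polyMoebius, if_neg n.succ_ne_zero] at hsum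
  split_ifs at hsum ⊢ <;> linarith

/-- Only the Möbius averages in degrees `0` and `1` are nonzero, so two terms survive. -/
theorem expect_sum_polyMoebius_mul_succ (n : ℕ) (g : ℕ → F[X] → ℝ) :
    𝔼 f ∈ monicsOfDegree F (n + 1),
        ∑ p ∈ monicFactorizations f, polyMoebius p.1 * g p.1.natDegree p.2 =
      𝔼 f ∈ monicsOfDegree F (n + 1), g 0 f - 𝔼 f ∈ monicsOfDegree F n, g 1 f := by
  calc 𝔼 f ∈ monicsOfDegree F (n + 1),
        ∑ p ∈ monicFactorizations f, polyMoebius p.1 * g p.1.natDegree p.2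
      = ∑ x ∈ antidiagonal (n + 1), (𝔼 a ∈ monicsOfDegree F x.1, polyMoebius a) *
          𝔼 b ∈ monicsOfDegree F x.2, g x.1 b := by
        rw [expect_sum_monicFactorizations (n + 1) fun a b ↦ polyMoebius a * g a.natDegree b]
        refine sum_congr rfl fun x _ ↦ ?_
        rw [expect_mul]
        refine expect_congr rfl fun a ha ↦ ?_
        rw [(mem_monicsOfDegree.mp ha).2, mul_expect]
    _ = 𝔼 f ∈ monicsOfDegree F (n + 1), g 0 f +
          ∑ x ∈ antidiagonal n, (if x.1 = 0 then -1 else 0) *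
            𝔼 f ∈ monicsOfDegree F x.2, g (x.1 + 1) f := by
        simp only [Nat.sum_antidiagonal_succ, expect_polyMoebius_zero, expect_polyMoebius_succ,
          one_mul]
    _ = 𝔼 f ∈ monicsOfDegree F (n + 1), g 0 f - 𝔼 f ∈ monicsOfDegree F n, g 1 f := by
        rw [sum_eq_single_of_mem (0, n) (by simp) ?_, if_pos rfl, neg_one_mul, ← sub_eq_add_neg]
        rintro ⟨i, j⟩ hij hne
        rw [if_neg, zero_mul]
        rintro rfl
        simp_all

variable (φ ψ : ℕ → ℝ)

theorem expect_comp_natDegree (n : ℕ) : 𝔼 f ∈ monicsOfDegree F n, φ f.natDegree = φ n := by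
  rw [← expect_const (monicsOfDegree_nonempty (F := F) n) (φ n)]
  exact expect_congr rfl fun f hf ↦ by rw [(mem_monicsOfDegree.mp hf).2]

theorem expect_moebiusTransform_succ (n : ℕ) :
    𝔼 f ∈ monicsOfDegree F (n + 1), moebiusTransform φ f = φ (n + 1) - φ n := by
  rw [← expect_comp_natDegree (F := F) φ (n + 1), ← expect_comp_natDegree (F := F) φ n]
  exact expect_sum_polyMoebius_mul_succ n fun _ f ↦ φ f.natDegree

variable {φ}

theorem expect_moebiusCross_zero (hφ : φ 0 = 0) :
    𝔼 f ∈ monicsOfDegree F 0, moebiusCross φ ψ f = 0 := by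
  simp [monicsOfDegree_zero, moebiusCross, monicFactorizations_one, hφ]

theorem expect_moebiusCross_succ (hφ : φ 0 = 0) (n : ℕ) :
    𝔼 f ∈ monicsOfDegree F (n + 1), moebiusCross φ ψ f =
      (φ (n + 1) - φ n) * (ψ (n + 1) - ψ n) := by
  have hmean (m i : ℕ) : 𝔼 f ∈ monicsOfDegree F m,
      φ f.natDegree * moebiusTransform (fun l ↦ ψ (i + l)) f =
        φ m * 𝔼 f ∈ monicsOfDegree F m, moebiusTransform (fun l ↦ ψ (i + l)) f := by
    rw [mul_expect]
    exact expect_congr rfl fun f hf ↦ by rw [(mem_monicsOfDegree.mp hf).2]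
  calc 𝔼 f ∈ monicsOfDegree F (n + 1), moebiusCross φ ψ f
      = φ (n + 1) * (ψ (n + 1) - ψ n) -
          φ n * 𝔼 f ∈ monicsOfDegree F n, moebiusTransform (fun l ↦ ψ (1 + l)) f := by
        refine (expect_sum_polyMoebius_mul_succ n fun i f ↦
          φ f.natDegree * moebiusTransform (fun l ↦ ψ (i + l)) f).trans ?_
        rw [hmean, hmean, expect_moebiusTransform_succ, zero_add, zero_add]
    _ = (φ (n + 1) - φ n) * (ψ (n + 1) - ψ n) := by
        rcases n with _ | n
        · rw [hφ]
          ring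
        · rw [expect_moebiusTransform_succ, add_comm 1, add_comm 1]
          ring

theorem expect_sum_moebiusCross (hφ : φ 0 = 0) (n : ℕ) :
    𝔼 f ∈ monicsOfDegree F n, ∑ p ∈ monicFactorizations f, moebiusCross φ ψ p.2 =
      ∑ d ∈ range n, (φ (d + 1) - φ d) * (ψ (d + 1) - ψ d) := by
  calc 𝔼 f ∈ monicsOfDegree F n, ∑ p ∈ monicFactorizations f, moebiusCross φ ψ p.2
      = 𝔼 f ∈ monicsOfDegree F n, ∑ p ∈ monicFactorizations f, moebiusCross φ ψ p.1 :=
        expect_congr rfl fun f _ ↦ sum_monicFactorizations_swap f fun _ b ↦ moebiusCross φ ψ b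
    _ = ∑ i ∈ range (n + 1), 𝔼 f ∈ monicsOfDegree F i, moebiusCross φ ψ f := by
        rw [expect_sum_monicFactorizations n fun a _ ↦ moebiusCross φ ψ a]
        simp only [expect_const (monicsOfDegree_nonempty _)]
        exact Nat.sum_antidiagonal_eq_sum_range_succ_mk
          (fun x ↦ 𝔼 f ∈ monicsOfDegree F x.1, moebiusCross φ ψ f) n
    _ = ∑ d ∈ range n, (φ (d + 1) - φ d) * (ψ (d + 1) - ψ d) := by
        rw [sum_range_succ', expect_moebiusCross_zero ψ hφ, add_zero]
        exact sum_congr rfl fun d _ ↦ expect_moebiusCross_succ ψ hφ d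

end Average

/-! ### The contribution of non-squarefree polynomials -/

section Squarefree

variable {F : Type*} [Field F] [Fintype F]

open Classical in
theorem filter_not_squarefree_subset_biUnion (n : ℕ) :
    {f ∈ monicsOfDegree F n | ¬Squarefree f} ⊆ (Icc 1 (n / 2)).biUnion fun i ↦
      (monicsOfDegree F i ×ˢ monicsOfDegree F (n - 2 * i)).image fun p ↦ p.1 * p.1 * p.2 := by
  intro f hf
  rw [mem_filter, mem_monicsOfDegree] at hf
  obtain ⟨⟨hf, hn⟩, hsq⟩ := hf
  obtain ⟨x, hx, hxu⟩ : ∃ x, x * x ∣ f ∧ ¬IsUnit x := by simpa [Squarefree] using hsq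
  obtain ⟨P, hP, hI, hPx⟩ := exists_monic_irreducible_factor x hxu
  obtain ⟨e, rfl⟩ := (mul_dvd_mul hPx hPx).trans hx
  have he : e.Monic := (hP.mul hP).of_mul_monic_left hf
  rw [(hP.mul hP).natDegree_mul he, hP.natDegree_mul hP] at hn
  have hpos := hI.natDegree_pos
  simp only [mem_biUnion, mem_Icc, mem_image, mem_product, mem_monicsOfDegree]
  exact ⟨P.natDegree, by lia, (P, e), ⟨⟨hP, rfl⟩, he, by lia⟩, rfl⟩

open Classical in
theorem card_filter_not_squarefree_mul_card_le (n : ℕ) :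
    #{f ∈ monicsOfDegree F n | ¬Squarefree f} * Fintype.card F ≤ n * Fintype.card F ^ n := by
  have hcard : ∀ i ∈ Icc 1 (n / 2), #((monicsOfDegree F i ×ˢ monicsOfDegree F (n - 2 * i)).image
      fun p ↦ p.1 * p.1 * p.2) * Fintype.card F ≤ Fintype.card F ^ n := by
    intro i hi
    rw [mem_Icc] at hi
    calc _ ≤ #(monicsOfDegree F i ×ˢ monicsOfDegree F (n - 2 * i)) * Fintype.card F :=
          Nat.mul_le_mul_right _ card_image_le
      _ = Fintype.card F ^ (i + (n - 2 * i) + 1) := by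
          rw [card_product, card_monicsOfDegree, card_monicsOfDegree, pow_succ, pow_add]
      _ ≤ Fintype.card F ^ n := Nat.pow_le_pow_right Fintype.card_pos (by lia)
  calc #{f ∈ monicsOfDegree F n | ¬Squarefree f} * Fintype.card F
      ≤ (∑ i ∈ Icc 1 (n / 2), #((monicsOfDegree F i ×ˢ monicsOfDegree F (n - 2 * i)).image
          fun p ↦ p.1 * p.1 * p.2)) * Fintype.card F :=
        Nat.mul_le_mul_right _
          ((card_le_card (filter_not_squarefree_subset_biUnion n)).trans card_biUnion_le)
    _ ≤ n / 2 * Fintype.card F ^ n := by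
        rw [sum_mul]
        simpa using sum_le_card_nsmul _ _ _ hcard
    _ ≤ n * Fintype.card F ^ n := Nat.mul_le_mul_right _ (Nat.div_le_self n 2)

theorem abs_expect_sub_expect_le {n : ℕ} {g h : F[X] → ℝ} {B : ℝ}
    (heq : ∀ f ∈ monicsOfDegree F n, Squarefree f → g f = h f)
    (hB : ∀ f ∈ monicsOfDegree F n, |g f - h f| ≤ B) :
    |𝔼 f ∈ monicsOfDegree F n, g f - 𝔼 f ∈ monicsOfDegree F n, h f| ≤
      n * B / Fintype.card F := by
  classical
  have hB₀ : 0 ≤ B :=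
    (monicsOfDegree_nonempty (F := F) n).elim fun f hf ↦ (abs_nonneg _).trans (hB f hf)
  have hq : 0 < (Fintype.card F : ℝ) := by exact_mod_cast Fintype.card_pos
  set N := #{f ∈ monicsOfDegree F n | ¬Squarefree f}
  have hN : (N * Fintype.card F : ℝ) ≤ n * Fintype.card F ^ n := by
    exact_mod_cast card_filter_not_squarefree_mul_card_le n
  have hsum : ∑ f ∈ monicsOfDegree F n, |g f - h f| ≤ N * B := by
    rw [← sum_filter_of_ne (p := fun f ↦ ¬Squarefree f)
      fun f hf hne hsq ↦ hne (by rw [heq f hf hsq, sub_self, abs_zero])]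
    simpa only [nsmul_eq_mul] using
      sum_le_card_nsmul _ _ B fun f hf ↦ hB f (mem_filter.mp hf).1
  calc |𝔼 f ∈ monicsOfDegree F n, g f - 𝔼 f ∈ monicsOfDegree F n, h f|
      ≤ (∑ f ∈ monicsOfDegree F n, |g f - h f|) / Fintype.card F ^ n := by
        rw [← expect_sub_distrib, ← Nat.cast_pow, ← card_monicsOfDegree, ← expect_eq_sum_div_card]
        exact abs_expect_le _ _
    _ ≤ N * B / Fintype.card F ^ n := by gcongr
    _ ≤ n * B / Fintype.card F := by
        rw [div_le_div_iff₀ (by positivity) hq, mul_right_comm, mul_right_comm (n : ℝ)]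
        exact mul_le_mul_of_nonneg_right hN hB₀

end Squarefree

/-! ### The covariance -/

section Covariance

variable {F : Type*} [Field F] [Fintype F] {φ ψ : ℕ → ℝ} {n : ℕ} {B : ℝ}

theorem abs_expect_moebiusTransform_mul_sub_le (hφ₀ : φ 0 = 0) (hφ : ∀ m ≤ n, |φ m| ≤ B)
    (hψ : ∀ m ≤ n, |ψ m| ≤ B) :
    |𝔼 f ∈ monicsOfDegree F n, moebiusTransform φ f * moebiusTransform ψ f -
        ∑ d ∈ range n, (φ (d + 1) - φ d) * (ψ (d + 1) - ψ d)| ≤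
      n * (2 * 8 ^ n * B ^ 2) / Fintype.card F := by
  rw [← expect_sum_moebiusCross (F := F) ψ hφ₀]
  refine abs_expect_sub_expect_le
    (fun f _ hsq ↦ moebiusTransform_mul_moebiusTransform φ ψ hsq) fun f hf ↦ ?_
  obtain ⟨hmonic, rfl⟩ := mem_monicsOfDegree.mp hf
  exact abs_moebiusTransform_mul_sub_sum_moebiusCross_le hmonic hφ hψ

theorem expect_sub_mul_sub {ι : Type*} {s : Finset ι} (hs : s.Nonempty) (g h : ι → ℝ) {a b : ℝ}
    (hg : 𝔼 i ∈ s, g i = a) (hh : 𝔼 i ∈ s, h i = b) :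
    𝔼 i ∈ s, (g i - a) * (h i - b) = 𝔼 i ∈ s, g i * h i - a * b := by
  simp only [sub_mul, mul_sub, expect_sub_distrib, ← expect_mul, ← mul_expect, hg, hh,
    expect_const hs]
  ring

theorem abs_covariance_moebiusTransform_sub_le (hφ₀ : φ 0 = 0) (hφ : ∀ m ≤ n + 1, |φ m| ≤ B)
    (hψ : ∀ m ≤ n + 1, |ψ m| ≤ B) :
    |𝔼 f ∈ monicsOfDegree F (n + 1), (moebiusTransform φ f - (φ (n + 1) - φ n)) *
          (moebiusTransform ψ f - (ψ (n + 1) - ψ n)) -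
        ∑ d ∈ range n, (φ (d + 1) - φ d) * (ψ (d + 1) - ψ d)| ≤
      (n + 1) * (2 * 8 ^ (n + 1) * B ^ 2) / Fintype.card F := by
  have hbound := abs_expect_moebiusTransform_mul_sub_le (F := F) hφ₀ hφ hψ
  rw [sum_range_succ, Nat.cast_succ] at hbound
  rwa [expect_sub_mul_sub (monicsOfDegree_nonempty _) _ _ (expect_moebiusTransform_succ φ n)
    (expect_moebiusTransform_succ ψ n), sub_sub, add_comm (_ * _)]

theorem polyVMT_eq_moebiusTransform_sub {j : ℕ} (hj : 1 ≤ j) {f : F[X]}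
    (hf : f ∈ monicsOfDegree F (n + 1)) :
    polyVMT j f = moebiusTransform (fun m ↦ (m : ℝ) ^ j) f - (((n + 1 : ℕ) : ℝ) ^ j - n ^ j) := by
  obtain ⟨hf, hdeg⟩ := mem_monicsOfDegree.mp hf
  rw [polyVMT, polyVMJ_eq_moebiusTransform hj hf, hdeg, Nat.cast_succ, add_sub_cancel_right]

theorem sum_Icc_one_eq_sum_range {R : Type*} [AddCommMonoid R] (g : ℕ → R) (n : ℕ) :
    ∑ d ∈ Icc 1 n, g d = ∑ d ∈ range n, g (d + 1) := by
  rw [range_eq_Ico, sum_Ico_add']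
  rfl

theorem exists_abs_expect_polyVMT_mul_polyVMT_sub_le {j k : ℕ} (hj : 1 ≤ j) (hk : 1 ≤ k)
    (n : ℕ) : ∃ C : ℝ, ∀ (F : Type*) [Field F] [Fintype F],
      |𝔼 f ∈ monicsOfDegree F (n + 1), polyVMT j f * polyVMT k f -
        ∑ d ∈ Icc 1 n, ((d : ℝ) ^ j - (d - 1) ^ j) * ((d : ℝ) ^ k - (d - 1) ^ k)| ≤
      C / Fintype.card F := by
  have hpow (i : ℕ) (hi : i ≤ max j k) :
      ∀ m ≤ n + 1, |(m : ℝ) ^ i| ≤ ((n + 1 : ℕ) : ℝ) ^ max j k := by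
    intro m hm
    rw [abs_of_nonneg (by positivity)]
    exact_mod_cast (Nat.pow_le_pow_left hm i).trans (Nat.pow_le_pow_right n.succ_pos hi)
  refine ⟨(n + 1) * (2 * 8 ^ (n + 1) * (((n + 1 : ℕ) : ℝ) ^ max j k) ^ 2), fun F _ _ ↦ ?_⟩
  have hsum : ∑ d ∈ Icc 1 n, ((d : ℝ) ^ j - (d - 1) ^ j) * ((d : ℝ) ^ k - (d - 1) ^ k) =
      ∑ d ∈ range n,
        (((d + 1 : ℕ) : ℝ) ^ j - d ^ j) * (((d + 1 : ℕ) : ℝ) ^ k - d ^ k) := by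
    simp only [sum_Icc_one_eq_sum_range, Nat.cast_succ, add_sub_cancel_right]
  rw [hsum, expect_congr rfl fun f hf ↦ by
    rw [polyVMT_eq_moebiusTransform_sub hj hf, polyVMT_eq_moebiusTransform_sub hk hf]]
  exact abs_covariance_moebiusTransform_sub_le (φ := fun m ↦ (m : ℝ) ^ j)
    (ψ := fun m ↦ (m : ℝ) ^ k) (by simp [Nat.ne_of_gt hj])
    (hpow j (le_max_left j k)) (hpow k (le_max_right j k))

theorem inv_mul_finsum_mem_monic_natDegree_eq (n : ℕ) (g : F[X] → ℝ) :
    ((Fintype.card F : ℝ) ^ n)⁻¹ * ∑ᶠ f ∈ {f : F[X] | f.Monic ∧ f.natDegree = n}, g f =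
      𝔼 f ∈ monicsOfDegree F n, g f := by
  have hset : {f : F[X] | f.Monic ∧ f.natDegree = n} = monicsOfDegree F n := by
    ext f
    rw [mem_coe, mem_monicsOfDegree, Set.mem_ofPred_eq]
  rw [hset, finsum_mem_coe_finset, expect_eq_sum_div_card, card_monicsOfDegree, Nat.cast_pow,
    inv_mul_eq_div]

end Covariance

end CovarianceEstimate

/-- Equation (1.13) of Rodgers, "The covariance of almost-primes in F_q[T]":
`lim_{q→∞} q^{-n} Σ_{f ∈ M_n} Λ̃_j(f) Λ̃_k(f) = Σ_{d=1}^{n-1} (d^j−(d−1)^j)(d^k−(d−1)^k)`. -/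
theorem covariance_of_centered_vonMangoldt (j k n : ℕ) (hj : 1 ≤ j) (hk : 1 ≤ k) (hn : 1 ≤ n) :
    ∀ ε : ℝ, 0 < ε → ∃ Q : ℕ, ∀ (F : Type) [Field F] [Fintype F],
      Q ≤ Fintype.card F →
      |((Fintype.card F : ℝ) ^ n)⁻¹ *
          (∑ᶠ f ∈ {f : F[X] | f.Monic ∧ f.natDegree = n}, polyVMT j f * polyVMT k f)
        - ∑ d ∈ Finset.Icc 1 (n - 1),
            ((d : ℝ) ^ j - ((d : ℝ) - 1) ^ j) * ((d : ℝ) ^ k - ((d : ℝ) - 1) ^ k)| < ε := by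
  intro ε hε
  obtain ⟨n, rfl⟩ := Nat.exists_eq_add_of_le' hn
  obtain ⟨C, hC⟩ := exists_abs_expect_polyVMT_mul_polyVMT_sub_le hj hk n
  obtain ⟨Q, hQ⟩ := exists_nat_gt (C / ε)
  refine ⟨Q, fun F _ _ hF ↦ ?_⟩
  have hq : 0 < (Fintype.card F : ℝ) := by exact_mod_cast Fintype.card_pos
  have hCq : C / Fintype.card F < ε := by
    rw [div_lt_comm₀ hq hε]
    exact hQ.trans_le (by exact_mod_cast hF)
  rw [inv_mul_finsum_mem_monic_natDegree_eq, Nat.add_sub_cancel]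
  exact (hC F).trans_lt hCq
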